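/- arXiv:1010.1709 — 6 statements merged into one kernel-verified Lean document; each statement's English description precedes it below -/
import Mathlib

section
/- For every closed walk p based at a vertex of the complete graph K₄, the sum over the darts of p of their assigned Gyroid vectors equals the zero vector of ℝ³ if and only if p is balanced, i.e., for every dart d, the number of occurrences of d among the darts of p equals the number of occurrences of the reversed dart of d. -/
/-- The complete graph on the four vertices `{A,B,C,D}` (as `Fin 4`, `A=0,B=1,C=2,D=3`). -/
abbrev GyrK4 : SimpleGraph (Fin 4) := ⊤

/-- The assignment of Gyroid vectors in `ℝ³` to ordered pairs of vertices of `K₄`: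
`A→B ↦ e₁`, `A→C ↦ e₂`, `A→D ↦ e₃`, `D→C ↦ e₄`, `D→B ↦ e₅`, `B→C ↦ e₆`,
with the reversed pair assigned the negative of the vector. -/
noncomputable def gyrVec : ℕ → ℕ → (Fin 3 → ℝ)
  | 0, 1 => ![-(1/4), 1/4, 0]        -- e₁
  | 1, 0 => ![1/4, -(1/4), 0]        -- -e₁
  | 0, 2 => ![0, -(1/4), 1/4]        -- e₂
  | 2, 0 => ![0, 1/4, -(1/4)]        -- -e₂
  | 0, 3 => ![1/4, 0, -(1/4)]        -- e₃
  | 3, 0 => ![-(1/4), 0, 1/4]        -- -e₃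
  | 3, 2 => ![1/4, 1/4, 0]           -- e₄
  | 2, 3 => ![-(1/4), -(1/4), 0]     -- -e₄
  | 3, 1 => ![0, -(1/4), -(1/4)]     -- e₅
  | 1, 3 => ![0, 1/4, 1/4]           -- -e₅
  | 1, 2 => ![-(1/4), 0, -(1/4)]     -- e₆
  | 2, 1 => ![1/4, 0, 1/4]           -- -e₆
  | _, _ => 0

/-- The Gyroid vector assigned to a dart of `K₄`. -/
noncomputable def gyrDartVec (d : GyrK4.Dart) : Fin 3 → ℝ := gyrVec d.toProd.1.val d.toProd.2.val

/-!
For a closed walk `p`, the net count of a dart (its occurrences minus those of its reverse) is a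
circulation on the graph: it is antisymmetric and `p` leaves each vertex as often as it enters it.
On `K₄` every circulation has the form `c ∘ gyrDartVec` for a linear functional `c`: the
three coordinates of the Gyroid vectors are circulations, and they span the circulation space,
which has dimension `6 - 3 = 3`. If the vectors along `p` sum to zero, then so do the values of
every such functional, in particular those of the net count itself; but the sum of the net count
along `p` is half the sum of its squares over all darts, so the net count vanishes.
-/

lemma sum_map_eq_sum_count_nsmul {α M : Type*} [Fintype α] [DecidableEq α] [AddCommMonoid M]
    (l : List α) (f : α → M) : (l.map f).sum = ∑ a, l.count a • f a := by
  rw [Finset.sum_list_map_count]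
  refine Finset.sum_subset l.toFinset.subset_univ fun a _ ha ↦ ?_
  rw [List.count_eq_zero_of_not_mem (by simpa using ha), zero_smul]

section Circulation

variable {V : Type*} {G : SimpleGraph V} {u v : V}

lemma map_fst_darts_perm_map_snd_darts (p : G.Walk v v) :
    (p.darts.map (·.fst)).Perm (p.darts.map (·.snd)) := by
  have h : p.darts.map (·.fst) ++ [v] = v :: p.darts.map (·.snd) :=
    p.map_fst_darts_append.trans p.cons_map_snd_darts.symm
  exact ((List.perm_append_singleton v _).symm.trans (.of_eq h)).cons_inv

lemma sum_map_darts_eq_zero_of_balanced [DecidableEq V] {E : Type*} [AddCommGroup E]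
    {φ : G.Dart → E} (hφ : ∀ d, φ d.symm = -φ d) {p : G.Walk u v}
    (hp : ∀ d, p.darts.count d = p.darts.count d.symm) : (p.darts.map φ).sum = 0 := by
  rw [Finset.sum_list_map_count]
  refine Finset.sum_involution (fun d _ ↦ d.symm) ?_ (fun d _ _ ↦ d.symm_ne) ?_
    fun d _ ↦ d.symm_symm
  · intro d _
    rw [← hp d, hφ d, smul_neg, add_neg_cancel]
  · intro d hd
    rwa [List.mem_toFinset, ← List.count_pos_iff, ← hp d, List.count_pos_iff, ← List.mem_toFinset]

/-- The net number of times that the walk `p` traverses the dart `d`: traversals of the reversed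
dart count negatively. The values lie in `R` instead of `ℤ` so that the net count can be compared
with `R`-valued functionals. -/
def netCount [DecidableEq V] (R : Type*) [Ring R] (p : G.Walk u v) (d : G.Dart) : R :=
  p.darts.count d - p.darts.count d.symm

lemma netCount_symm [DecidableEq V] (R : Type*) [Ring R] (p : G.Walk u v) (d : G.Dart) :
    netCount R p d.symm = -netCount R p d := by
  simp [netCount]

variable [Fintype G.Dart] [DecidableEq V]

/-- A circulation on `G`: an antisymmetric function on the darts obeying Kirchhoff's law, i.e. with
zero total outflow at each vertex. -/
structure IsCirculation {A : Type*} [AddCommGroup A] (f : G.Dart → A) : Prop where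
  map_symm : ∀ d, f d.symm = -f d
  sum_fst_eq_zero : ∀ a, ∑ d with d.fst = a, f d = 0

lemma sum_netCount_mul {R : Type*} [Ring R] (p : G.Walk u v) (g : G.Dart → R) :
    ∑ d, netCount R p d * g d =
      (p.darts.map g).sum - (p.darts.map fun d ↦ g d.symm).sum := by
  have reindex : ∑ d, (p.darts.count d.symm : R) * g d =
      ∑ d, (p.darts.count d : R) * g d.symm :=
    Fintype.sum_equiv SimpleGraph.Dart.symm_involutive.toPerm _ _ (by simp)
  simp only [netCount, sub_mul, Finset.sum_sub_distrib, reindex, sum_map_eq_sum_count_nsmul,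
    nsmul_eq_mul]

lemma isCirculation_netCount (R : Type*) [Ring R] (p : G.Walk v v) :
    IsCirculation (netCount R p) where
  map_symm := netCount_symm R p
  sum_fst_eq_zero a := by
    let ind (b : V) : R := if b = a then 1 else 0
    calc ∑ d with d.fst = a, netCount R p d
        = ∑ d, netCount R p d * ind d.fst := by simp [ind, Finset.sum_filter]
      _ = ((p.darts.map (·.fst)).map ind).sum - ((p.darts.map (·.snd)).map ind).sum := by
        rw [sum_netCount_mul, List.map_map, List.map_map]; rfl
      _ = 0 := sub_eq_zero.2 ((map_fst_darts_perm_map_snd_darts p).map ind).sum_eq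

theorem sum_map_darts_eq_zero_iff_balanced {R E : Type*} [Ring R] [LinearOrder R]
    [IsStrictOrderedRing R] [AddCommGroup E] {φ : G.Dart → E}
    (hφ : ∀ d, φ d.symm = -φ d)
    (hfactor : ∀ f : G.Dart → R, IsCirculation f → ∃ c : E →+ R, ∀ d, f d = c (φ d))
    (p : G.Walk v v) :
    (p.darts.map φ).sum = 0 ↔ ∀ d, p.darts.count d = p.darts.count d.symm := by
  refine ⟨fun hsum d ↦ ?_, sum_map_darts_eq_zero_of_balanced hφ⟩
  obtain ⟨c, hc⟩ := hfactor _ (isCirculation_netCount R p)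
  have sum_along : (p.darts.map (netCount R p)).sum = 0 := by
    rw [funext hc, ← Function.comp_def, ← List.map_map, ← map_list_sum, hsum, map_zero]
  have sum_sq : ∑ d, netCount R p d * netCount R p d = 0 := by
    have sum_neg : (p.darts.map fun d ↦ netCount R p d.symm).sum = 0 := by
      rw [← neg_eq_zero, List.sum_neg, List.map_map]
      simpa [Function.comp_def, netCount_symm] using sum_along
    rw [sum_netCount_mul, sum_along, sum_neg, sub_zero]
  have net_zero : netCount R p d = 0 := mul_self_eq_zero.1 <|
    (Finset.sum_eq_zero_iff_of_nonneg fun d _ ↦ mul_self_nonneg _).1 sum_sq d (Finset.mem_univ d)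
  exact_mod_cast sub_eq_zero.1 net_zero

end Circulation

lemma gyrDartVec_symm (d : GyrK4.Dart) : gyrDartVec d.symm = -gyrDartVec d := by
  obtain ⟨⟨a, b⟩, hab⟩ := d
  fin_cases a <;> fin_cases b <;> simp [gyrDartVec, gyrVec] at hab ⊢

lemma IsCirculation.add_add_eq_zero {A : Type*} [AddCommGroup A] {f : GyrK4.Dart → A}
    (hf : IsCirculation f) {a b c d : Fin 4} (hb : a ≠ b) (hc : a ≠ c) (hd : a ≠ d)
    (hbcd : [b, c, d].Nodup) : f ⟨(a, b), hb⟩ + f ⟨(a, c), hc⟩ + f ⟨(a, d), hd⟩ = 0 := by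
  have out_darts : ({e | e.fst = a} : Finset GyrK4.Dart) =
      {⟨(a, b), hb⟩, ⟨(a, c), hc⟩, ⟨(a, d), hd⟩} := by
    clear hf
    decide +revert
  have kirchhoff := hf.sum_fst_eq_zero a
  rwa [out_darts, Finset.sum_insert (by simp_all), Finset.sum_pair (by simp_all),
    ← add_assoc] at kirchhoff

lemma IsCirculation.exists_eq_comp_gyrDartVec {f : GyrK4.Dart → ℝ} (hf : IsCirculation f) :
    ∃ c : (Fin 3 → ℝ) →ₗ[ℝ] ℝ, ∀ d, f d = c (gyrDartVec d) := by
  let x (a b : Fin 4) (h : a ≠ b := by decide) : ℝ := f ⟨(a, b), h⟩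
  have skew (a b : Fin 4) (h : a ≠ b := by decide) : x b a h.symm = -x a b h :=
    hf.map_symm ⟨(a, b), h⟩
  have out_A : x 0 1 + x 0 2 + x 0 3 = 0 := hf.add_add_eq_zero _ _ _ (by decide)
  have out_B : x 1 0 + x 1 2 + x 1 3 = 0 := hf.add_add_eq_zero _ _ _ (by decide)
  have out_C : x 2 0 + x 2 1 + x 2 3 = 0 := hf.add_add_eq_zero _ _ _ (by decide)
  -- `e₃ - e₆`, `e₁ + e₄` and `e₂ - e₅` are half the standard basis vectors.
  let k : Fin 3 → ℝ := ![2 * (x 0 3 - x 1 2), 2 * (x 0 1 + x 3 2), 2 * (x 0 2 - x 3 1)]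
  let c : (Fin 3 → ℝ) →ₗ[ℝ] ℝ := ∑ i, k i • LinearMap.proj i
  have c_apply (y : Fin 3 → ℝ) : c y = k 0 * y 0 + k 1 * y 1 + k 2 * y 2 := by
    simp [c, Fin.sum_univ_three]
  refine ⟨c, fun d ↦ ?_⟩
  rw [c_apply]
  obtain ⟨⟨a, b⟩, h⟩ := d
  change x a b h = _
  fin_cases a <;> fin_cases b <;> first
    | exact absurd rfl h
    | simp only [Fin.zero_eta, Fin.mk_one, Fin.reduceFinMk, gyrDartVec, gyrVec, k, Matrix.cons_val]
      linarith [skew 0 1, skew 0 2, skew 0 3, skew 3 2, skew 3 1, skew 1 2]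

/-- For every closed walk `p` based at a vertex of `K₄`, the sum over the
darts of `p` of their Gyroid vectors is `0 ∈ ℝ³` if and only if `p` is balanced: every
dart occurs in `p` as often as its reverse. -/
theorem gyroid_walk_sum_eq_zero_iff_balanced (v : Fin 4) (p : GyrK4.Walk v v) :
    (p.darts.map gyrDartVec).sum = 0 ↔
      ∀ d : GyrK4.Dart, p.darts.count d = p.darts.count d.symm :=
  sum_map_darts_eq_zero_iff_balanced gyrDartVec_symm
    (fun _ hf ↦ hf.exists_eq_comp_gyrDartVec.imp' LinearMap.toAddMonoidHom fun _ ↦ id) p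
end

section
/- Every closed walk p based at a vertex of the complete graph K₄ that has positive length, has no backtracking (no two consecutive darts of p are reverses of each other), and is balanced (for every dart d, the number of occurrences of d among the darts of p equals the number of occurrences of the reversed dart of d) has length at least 10. -/
/-!
A balanced walk crosses each of its edges in both directions, so its length is at least twice the
number of edges of the subgraph it spans. If the last dart of a closed walk retraces the first one,
removing both shortens the walk by two and loses at most one vertex, so in proving
`2 * (#vertices + 1) ≤ length` one may assume that this does not happen. Then the spanned subgraph
has minimum degree two. It is not a union of cycles: between a passage of an edge and an innermost
passage of the same edge in the opposite direction the walk must turn around, which without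
backtracking is possible only at a vertex of degree at least three. So by the handshake lemma there
are more edges than vertices. The branching vertex also forces at least four vertices, whence the
length is at least `2 * (4 + 1)`.
-/

open SimpleGraph

variable {V : Type*} {G : SimpleGraph V} {u v w x : V}

/-- A walk is non-backtracking if it never follows a dart immediately by its reverse. The first and
the last dart of a closed walk are not compared. -/
def IsNonBacktracking (p : G.Walk u v) : Prop :=
  p.darts.IsChain fun d d' ↦ d' ≠ d.symm

/-- A walk is balanced if it traverses every edge equally often in both directions, that is, if the
integral 1-chain it defines vanishes. Balanced closed walks are those that lift to closed walks on
the maximal abelian cover, which for `K₄` is the Gyroid graph. -/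
def IsBalanced [DecidableEq V] (p : G.Walk u v) : Prop :=
  ∀ d : G.Dart, p.darts.count d = p.darts.count d.symm

theorem IsNonBacktracking.getVert_add_two_ne {p : G.Walk u v} (hp : IsNonBacktracking p) {i : ℕ}
    (hi : i + 1 < p.length) : p.getVert (i + 2) ≠ p.getVert i := by
  intro h
  refine List.isChain_iff_getElem.mp hp i (by simpa using hi) ?_
  ext <;> simp [Walk.darts_getElem_eq_getVert, h]

theorem IsNonBacktracking.of_cons_concat {h : G.Adj u v} {p : G.Walk v w} {h' : G.Adj w x}
    (hp : IsNonBacktracking (.cons h (p.concat h'))) : IsNonBacktracking p := by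
  simp only [IsNonBacktracking, Walk.darts_cons, Walk.darts_concat, List.concat_eq_append] at hp
  exact hp.tail.left_of_append

theorem IsNonBacktracking.not_nil_of_cons_concat {h : G.Adj u v} {p : G.Walk v v}
    (hp : IsNonBacktracking (.cons h (p.concat h.symm))) : ¬p.Nil := by
  intro hnil
  rw [Walk.eq_nil_iff_nil.mpr hnil] at hp
  exact hp.getVert_add_two_ne (i := 0) (by simp) rfl

theorem IsBalanced.symm_mem_darts [DecidableEq V] {p : G.Walk u v} (hp : IsBalanced p) {d : G.Dart}
    (hd : d ∈ p.darts) : d.symm ∈ p.darts := by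
  rwa [← List.count_pos_iff, ← hp d, List.count_pos_iff]

theorem IsBalanced.of_cons_concat [DecidableEq V] {h : G.Adj u v} {p : G.Walk v v}
    (hp : IsBalanced (.cons h (p.concat h.symm))) : IsBalanced p := by
  intro d
  have hd := hp d
  simp only [Walk.darts_cons, Walk.darts_concat, List.concat_eq_append, List.count_cons,
    List.count_append, List.count_nil, beq_iff_eq] at hd
  have hfirst : (⟨(u, v), h⟩ : G.Dart) = d.symm ↔ ⟨(v, u), h.symm⟩ = d :=
    Dart.symm_involutive.eq_iff.symm
  have hlast : (⟨(v, u), h.symm⟩ : G.Dart) = d.symm ↔ ⟨(u, v), h⟩ = d :=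
    Dart.symm_involutive.eq_iff.symm
  simp only [hfirst, hlast] at hd
  omega

theorem IsBalanced.card_dart_toSubgraph_le_length [DecidableEq V] {p : G.Walk u v}
    (hp : IsBalanced p) : Nat.card p.toSubgraph.coe.Dart ≤ p.length := by
  have hmem (d : p.toSubgraph.coe.Dart) : p.toSubgraph.hom.mapDart d ∈ p.darts.toFinset := by
    obtain ⟨d', hd', hedge⟩ := List.mem_map.mp (p.adj_toSubgraph_iff_mem_edges.mp d.adj)
    rw [List.mem_toFinset]
    obtain rfl | rfl := (dart_edge_eq_iff d' (p.toSubgraph.hom.mapDart d)).mp hedge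
    · exact hd'
    · simpa using hp.symm_mem_darts hd'
  have hinj : Function.Injective fun d ↦
      (⟨p.toSubgraph.hom.mapDart d, hmem d⟩ : p.darts.toFinset) := by
    intro d d' h
    have hfst : (d.fst : V) = d'.fst := congrArg (fun e ↦ e.1.fst) h
    have hsnd : (d.snd : V) = d'.snd := congrArg (fun e ↦ e.1.snd) h
    exact Dart.ext _ _ (Prod.ext (Subtype.ext hfst) (Subtype.ext hsnd))
  calc Nat.card p.toSubgraph.coe.Dart
      ≤ Nat.card p.darts.toFinset := Nat.card_le_card_of_injective _ hinj
    _ = p.darts.toFinset.card := Nat.card_eq_finsetCard _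
    _ ≤ p.length := p.length_darts ▸ p.darts.toFinset_card_le

theorem IsNonBacktracking.exists_three_le_ncard_neighborSet_of_getVert_eq
    {p : G.Walk u v} (hp : IsNonBacktracking p) {i k : ℕ} (hk : i + k < p.length)
    (hfst : p.getVert (i + k) = p.getVert (i + 1)) (hsnd : p.getVert (i + k + 1) = p.getVert i) :
    ∃ x, 3 ≤ (p.toSubgraph.neighborSet x).ncard := by
  induction k using Nat.twoStepInduction generalizing i with
  | zero => exact absurd hfst (p.adj_getVert_succ hk).ne
  | one => exact absurd hsnd (hp.getVert_add_two_ne hk)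
  | more k ih _ =>
    by_cases hturn : p.getVert (i + k + 1) = p.getVert (i + 2)
    · exact ih (i := i + 1) (by omega) (by grind) (by grind)
    · have hprev : p.toSubgraph.Adj (p.getVert (i + 1)) (p.getVert i) :=
        (p.toSubgraph_adj_getVert (by omega)).symm
      have hnext : p.toSubgraph.Adj (p.getVert (i + 1)) (p.getVert (i + 2)) :=
        p.toSubgraph_adj_getVert (by omega)
      have hback : p.toSubgraph.Adj (p.getVert (i + 1)) (p.getVert (i + k + 1)) :=
        hfst ▸ (p.toSubgraph_adj_getVert (i := i + k + 1) (by omega)).symm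
      have hne : p.getVert (i + 2) ≠ p.getVert i := hp.getVert_add_two_ne (by omega)
      have hne' : p.getVert (i + k + 1) ≠ p.getVert i :=
        hsnd ▸ (hp.getVert_add_two_ne (i := i + k + 1) (by omega)).symm
      exact ⟨p.getVert (i + 1), (Set.two_lt_ncard p.finite_neighborSet_toSubgraph).mpr
        ⟨_, hprev, _, hnext, _, hback, hne.symm, hne'.symm, Ne.symm hturn⟩⟩

theorem exists_three_le_ncard_neighborSet_toSubgraph [DecidableEq V] {p : G.Walk u v}
    (hnil : ¬p.Nil) (hnb : IsNonBacktracking p) (hbal : IsBalanced p) :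
    ∃ x, 3 ≤ (p.toSubgraph.neighborSet x).ncard := by
  obtain ⟨k, hk, hrev⟩ := List.mem_iff_getElem.mp
    (hbal.symm_mem_darts (p.firstDart_mem_darts hnil))
  rw [p.darts_getElem_eq_getVert, Dart.ext_iff, Prod.ext_iff] at hrev
  exact hnb.exists_three_le_ncard_neighborSet_of_getVert_eq (i := 0) (k := k) (by simpa using hk)
    (by simpa using hrev.1) (by simpa using hrev.2)

theorem finite_verts_toSubgraph (p : G.Walk u v) : p.toSubgraph.verts.Finite :=
  p.verts_toSubgraph ▸ p.support.finite_toSet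

theorem four_le_ncard_verts_toSubgraph [DecidableEq V] {p : G.Walk u v}
    (hnil : ¬p.Nil) (hnb : IsNonBacktracking p) (hbal : IsBalanced p) :
    4 ≤ p.toSubgraph.verts.ncard := by
  obtain ⟨x, hx⟩ := exists_three_le_ncard_neighborSet_toSubgraph hnil hnb hbal
  obtain ⟨y, hy⟩ := Set.nonempty_of_ncard_ne_zero (s := p.toSubgraph.neighborSet x) (by omega)
  have hx_notMem : x ∉ p.toSubgraph.neighborSet x := fun h ↦ h.ne rfl
  calc 4 ≤ (p.toSubgraph.neighborSet x).ncard + 1 := by omega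
    _ = (insert x (p.toSubgraph.neighborSet x)).ncard :=
      (Set.ncard_insert_of_notMem hx_notMem p.finite_neighborSet_toSubgraph).symm
    _ ≤ p.toSubgraph.verts.ncard := Set.ncard_le_ncard
      (Set.insert_subset hy.fst_mem (p.toSubgraph.neighborSet_subset_verts x))
      (finite_verts_toSubgraph p)

theorem IsNonBacktracking.two_le_ncard_neighborSet_of_snd_ne_penultimate
    {p : G.Walk v v} (hp : IsNonBacktracking p) (hnil : ¬p.Nil)
    (hne : p.snd ≠ p.penultimate) (hx : x ∈ p.support) :
    2 ≤ (p.toSubgraph.neighborSet x).ncard := by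
  refine (Set.one_lt_ncard p.finite_neighborSet_toSubgraph).mpr ?_
  obtain ⟨i, rfl, hi⟩ := Walk.mem_support_iff_exists_getVert.mp hx
  by_cases hend : i = 0 ∨ i = p.length
  · have hbase : p.getVert i = v := by rcases hend with rfl | rfl <;> simp
    rw [hbase]
    exact ⟨_, p.toSubgraph_adj_snd hnil, _, (p.toSubgraph_adj_penultimate hnil).symm, hne⟩
  · obtain ⟨i, rfl⟩ : ∃ j, i = j + 1 := Nat.exists_eq_succ_of_ne_zero (by tauto)
    exact ⟨_, p.toSubgraph_adj_getVert (i := i + 1) (by omega),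
      _, (p.toSubgraph_adj_getVert (i := i) (by omega)).symm, hp.getVert_add_two_ne (by omega)⟩

theorem card_lt_card_edgeFinset_of_two_le_degree [Fintype V] [DecidableRel G.Adj]
    (hmin : ∀ y, 2 ≤ G.degree y) (hx : 3 ≤ G.degree x) :
    Fintype.card V < G.edgeFinset.card := by
  have hsum : ∑ _y : V, 2 < ∑ y, G.degree y :=
    Finset.sum_lt_sum (fun y _ ↦ hmin y) ⟨x, Finset.mem_univ x, hx⟩
  rw [G.sum_degrees_eq_twice_card_edges, Finset.sum_const, Finset.card_univ, smul_eq_mul] at hsum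
  omega

theorem two_mul_ncard_verts_add_one_le_card_dart {H : G.Subgraph} [Finite H.verts]
    (hmin : ∀ y ∈ H.verts, 2 ≤ (H.neighborSet y).ncard) (hx : 3 ≤ (H.neighborSet x).ncard) :
    2 * (H.verts.ncard + 1) ≤ Nat.card H.coe.Dart := by
  classical
  have := Fintype.ofFinite H.verts
  have hdeg (y : H.verts) [Fintype (H.coe.neighborSet y)] :
      H.coe.degree y = (H.neighborSet y).ncard := by
    rw [H.coe_degree, ← H.finset_card_neighborSet_eq_degree, Set.ncard_eq_toFinset_card']
  obtain ⟨y, hy⟩ := Set.nonempty_of_ncard_ne_zero (s := H.neighborSet x) (by omega)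
  have hcard := card_lt_card_edgeFinset_of_two_le_degree (G := H.coe) (x := ⟨x, hy.fst_mem⟩)
    (fun z ↦ by rw [hdeg]; exact hmin z z.2) (by rw [hdeg]; exact hx)
  rw [Nat.card_eq_fintype_card, H.coe.dart_card_eq_twice_card_edges,
    ← Nat.card_coe_set_eq, Nat.card_eq_fintype_card]
  omega

theorem exists_eq_cons_concat_of_snd_eq_penultimate {p : G.Walk v v} (hnil : ¬p.Nil)
    (h : p.snd = p.penultimate) :
    ∃ (w : V) (hw : G.Adj v w) (q : G.Walk w w), p = .cons hw (q.concat hw.symm) := by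
  cases p with
  | nil => exact absurd .nil hnil
  | @cons _ w _ hw p =>
    have hp : ¬p.Nil := Walk.not_nil_of_ne hw.ne'
    obtain ⟨x, q, hx, rfl⟩ : ∃ (x : V) (q : G.Walk w x) (hx : G.Adj x v), p = q.concat hx :=
      ⟨_, p.dropLast, p.adj_penultimate hp, (Walk.concat_dropLast _).symm⟩
    obtain rfl : w = x := by
      simpa [Walk.penultimate_cons_of_not_nil _ _ hp] using h
    exact ⟨w, hw, q, rfl⟩

theorem ncard_verts_toSubgraph_cons_concat_le (h : G.Adj u v) (p : G.Walk v w)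
    (h' : G.Adj w u) :
    (Walk.cons h (p.concat h')).toSubgraph.verts.ncard ≤ p.toSubgraph.verts.ncard + 1 := by
  have hverts : (Walk.cons h (p.concat h')).toSubgraph.verts = insert u p.toSubgraph.verts := by
    ext x
    simp only [Walk.mem_verts_toSubgraph, Walk.support_cons, Walk.support_concat, List.mem_cons,
      List.mem_append, Set.mem_insert_iff]
    grind
  exact hverts ▸ Set.ncard_insert_le u p.toSubgraph.verts

theorem two_mul_ncard_verts_add_one_le_length [DecidableEq V] {p : G.Walk v v}
    (hnil : ¬p.Nil) (hnb : IsNonBacktracking p) (hbal : IsBalanced p) :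
    2 * (p.toSubgraph.verts.ncard + 1) ≤ p.length := by
  induction hn : p.length using Nat.strong_induction_on generalizing v p with
  | _ n ih =>
  subst hn
  by_cases hretrace : p.snd = p.penultimate
  · obtain ⟨w, h, q, rfl⟩ := exists_eq_cons_concat_of_snd_eq_penultimate hnil hretrace
    have hlength : (Walk.cons h (q.concat h.symm)).length = q.length + 2 := by simp
    have hq := ih q.length (by omega) hnb.not_nil_of_cons_concat hnb.of_cons_concat
      hbal.of_cons_concat rfl
    have hverts := ncard_verts_toSubgraph_cons_concat_le h q h.symm
    omega
  · obtain ⟨x, hx⟩ := exists_three_le_ncard_neighborSet_toSubgraph hnil hnb hbal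
    have : Finite p.toSubgraph.verts := finite_verts_toSubgraph p
    have hmin : ∀ y ∈ p.toSubgraph.verts, 2 ≤ (p.toSubgraph.neighborSet y).ncard := fun y hy ↦
      hnb.two_le_ncard_neighborSet_of_snd_ne_penultimate hnil hretrace
        (p.mem_verts_toSubgraph.mp hy)
    calc 2 * (p.toSubgraph.verts.ncard + 1)
        ≤ Nat.card p.toSubgraph.coe.Dart := two_mul_ncard_verts_add_one_le_card_dart hmin hx
      _ ≤ p.length := hbal.card_dart_toSubgraph_le_length

theorem gyroid_minimal_loop_length_general [DecidableEq V] (p : G.Walk v v) (hpos : 0 < p.length)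
    (hnb : IsNonBacktracking p) (hbal : IsBalanced p) : 10 ≤ p.length := by
  have hnil : ¬p.Nil := Walk.not_nil_iff_lt_length.mpr hpos
  have hverts : 4 ≤ p.toSubgraph.verts.ncard := four_le_ncard_verts_toSubgraph hnil hnb hbal
  have hlength := two_mul_ncard_verts_add_one_le_length hnil hnb hbal
  omega

/-- Every closed walk on `K₄` of positive length, with no backtracking
(no two consecutive darts are reverses of each other) and balanced (every dart occurs as
often as its reverse), has length at least `10`. -/
theorem gyroid_minimal_loop_length (v : Fin 4) (p : GyrK4.Walk v v)
    (hpos : 0 < p.length)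
    (hnb : p.darts.Chain' (fun d d' => d' ≠ d.symm))
    (hbal : ∀ d : GyrK4.Dart, p.darts.count d = p.darts.count d.symm) :
    10 ≤ p.length :=
  gyroid_minimal_loop_length_general p hpos hnb hbal
end

section
/- Let L_bcc be the additive subgroup of ℝ³ generated by (1,0,0), (0,1,0), and (1/2,1/2,1/2) (the body centered cubic lattice). For indices i, j ∈ {0,…,7}, one has vᵢ − vⱼ ∈ L_bcc if and only if i = j or {i,j} is one of the four pairs {0,6}, {1,7}, {2,4}, {3,5}. In particular, the eight Gyroid vertices fall into exactly four translation classes modulo L_bcc, represented by v₀, v₁, v₂, v₃. -/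
/-- The eight Gyroid vertices `v₀,…,v₇` in `ℝ³`. -/
noncomputable def gyrV : Fin 8 → (Fin 3 → ℝ) :=
  ![![5/8, 5/8, 5/8],   -- v₀
    ![3/8, 7/8, 5/8],   -- v₁
    ![3/8, 1/8, 7/8],   -- v₂
    ![5/8, 3/8, 7/8],   -- v₃
    ![7/8, 5/8, 3/8],   -- v₄
    ![1/8, 7/8, 3/8],   -- v₅
    ![1/8, 1/8, 1/8],   -- v₆
    ![7/8, 3/8, 1/8]]   -- v₇

/-- The body centered cubic lattice: the additive subgroup of `ℝ³` generated by
`(1,0,0)`, `(0,1,0)` and `(1/2,1/2,1/2)`. -/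
noncomputable def Lbcc : AddSubgroup (Fin 3 → ℝ) :=
  AddSubgroup.closure {![1, 0, 0], ![0, 1, 0], ![1/2, 1/2, 1/2]}

/-!
In the basis `(1,0,0), (0,1,0), (1/2,1/2,1/2)` a vector `x` has coordinates
`(x₀ - x₂, x₁ - x₂, 2x₂)`, so it lies in the lattice iff these three numbers are integers. The
vertices lie in `(1/8)ℤ³`, hence the lattice coordinates of `8vᵢ` modulo `8` form a complete
invariant of the translation class of `vᵢ`.
-/

/-- The coordinates with respect to `(1,0,0), (0,1,0), (1/2,1/2,1/2)`. The formula needs no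
division, so it also applies to integer vectors and to their residues. -/
def bccCoord (R : Type*) [CommRing R] : (Fin 3 → R) →ₗ[R] (Fin 3 → R) where
  toFun x := ![x 0 - x 2, x 1 - x 2, 2 * x 2]
  map_add' x y := by
    ext k
    fin_cases k <;> simp [add_sub_add_comm, mul_add]
  map_smul' r x := by
    ext k
    fin_cases k <;> simp [mul_sub, mul_left_comm]

theorem bccCoord_comp_ringHom {R S : Type*} [CommRing R] [CommRing S] (f : R →+* S)
    (x : Fin 3 → R) : bccCoord S (f ∘ x) = f ∘ bccCoord R x := by
  ext k
  fin_cases k <;> simp [bccCoord, map_ofNat]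

/-- The generators of the body centered cubic lattice as a basis of `ℝ³`, encoded by its
coordinate isomorphism. -/
noncomputable def bccBasis : Module.Basis (Fin 3) ℝ (Fin 3 → ℝ) :=
  .ofEquivFun
    { bccCoord ℝ with
      invFun c := ![c 0 + c 2 / 2, c 1 + c 2 / 2, c 2 / 2]
      left_inv x := by
        ext k
        fin_cases k <;> simp [bccCoord]
      right_inv c := by
        ext k
        fin_cases k <;> simp [bccCoord, mul_div_cancel₀] }

theorem bccBasis_repr (x : Fin 3 → ℝ) : ⇑(bccBasis.repr x) = bccCoord ℝ x :=
  rfl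

theorem coe_bccBasis : ⇑bccBasis = ![![1, 0, 0], ![0, 1, 0], ![1/2, 1/2, 1/2]] := by
  ext i k
  fin_cases i <;> fin_cases k <;> simp [bccBasis]

theorem span_range_bccBasis :
    (Submodule.span ℤ (Set.range bccBasis)).toAddSubgroup = Lbcc := by
  rw [Submodule.span_int_eq_addSubgroupClosure, Lbcc, coe_bccBasis]
  simp only [Matrix.range_cons, Matrix.range_empty, Set.union_empty, Set.singleton_union]

theorem mem_Lbcc_iff (x : Fin 3 → ℝ) :
    x ∈ Lbcc ↔ ∀ k, bccCoord ℝ x k ∈ Set.range ((↑) : ℤ → ℝ) := by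
  rw [← span_range_bccBasis, Submodule.mem_toAddSubgroup, ← bccBasis_repr]
  exact bccBasis.mem_span_iff_repr_mem ℤ x

theorem inv_mul_intCast_mem_range_intCast_iff {K : Type*} [DivisionRing K] [CharZero K] (n : ℕ)
    [NeZero n] (m : ℤ) :
    (n : K)⁻¹ * m ∈ Set.range ((↑) : ℤ → K) ↔ (m : ZMod n) = 0 := by
  rw [ZMod.intCast_zmod_eq_zero_iff_dvd]
  refine exists_congr fun c ↦ ?_
  rw [eq_inv_mul_iff_mul_eq₀ (NeZero.ne (n : K)), eq_comm]
  norm_cast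

theorem inv_smul_intCast_mem_Lbcc_iff (n : ℕ) [NeZero n] (p : Fin 3 → ℤ) :
    (n : ℝ)⁻¹ • (Int.castRingHom ℝ ∘ p) ∈ Lbcc ↔
      bccCoord (ZMod n) (Int.castRingHom (ZMod n) ∘ p) = 0 := by
  rw [mem_Lbcc_iff, map_smul, bccCoord_comp_ringHom, bccCoord_comp_ringHom, funext_iff]
  exact forall_congr' fun k ↦ inv_mul_intCast_mem_range_intCast_iff n (bccCoord ℤ p k)

theorem inv_smul_sub_inv_smul_mem_Lbcc_iff (n : ℕ) [NeZero n] (p q : Fin 3 → ℤ) :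
    (n : ℝ)⁻¹ • (Int.castRingHom ℝ ∘ p) - (n : ℝ)⁻¹ • (Int.castRingHom ℝ ∘ q) ∈ Lbcc ↔
      bccCoord (ZMod n) (Int.castRingHom (ZMod n) ∘ p) =
        bccCoord (ZMod n) (Int.castRingHom (ZMod n) ∘ q) := by
  have comp_sub {R : Type} [CommRing R] :
      Int.castRingHom R ∘ p - Int.castRingHom R ∘ q = Int.castRingHom R ∘ (p - q) :=
    funext fun k ↦ (map_sub (Int.castRingHom R) (p k) (q k)).symm
  rw [← smul_sub, comp_sub, inv_smul_intCast_mem_Lbcc_iff, ← comp_sub, map_sub, sub_eq_zero]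

/-- The vertex coordinates multiplied by `8`. -/
def gyrNum : Fin 8 → Fin 3 → ℤ :=
  ![![5, 5, 5], ![3, 7, 5], ![3, 1, 7], ![5, 3, 7], ![7, 5, 3], ![1, 7, 3], ![1, 1, 1], ![7, 3, 1]]

theorem gyrV_eq_inv_smul_gyrNum (i : Fin 8) :
    gyrV i = ((8 : ℕ) : ℝ)⁻¹ • (Int.castRingHom ℝ ∘ gyrNum i) := by
  ext k
  fin_cases i <;> fin_cases k <;> simp [gyrV, gyrNum, div_eq_inv_mul]

/-- The translation class of a vertex, labelled by the index of its representative among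
`v₀, v₁, v₂, v₃`. -/
def gyrClass : Fin 8 → Fin 4 :=
  ![0, 1, 2, 3, 2, 3, 0, 1]

theorem gyrClass_castLE (j : Fin 4) : gyrClass (Fin.castLE (by norm_num) j) = j := by
  revert j
  decide

/-- The lattice coordinates of `8v₀, 8v₁, 8v₂, 8v₃` modulo `8`, which tell the translation classes
apart. -/
def classResidue : Fin 4 → Fin 3 → ZMod 8 :=
  ![![0, 0, 2], ![6, 2, 2], ![4, 2, 6], ![6, 4, 6]]

theorem classResidue_injective : Function.Injective classResidue := by
  decide

theorem bccCoord_gyrNum_mod_eight (i : Fin 8) :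
    bccCoord (ZMod 8) (Int.castRingHom (ZMod 8) ∘ gyrNum i) = classResidue (gyrClass i) := by
  revert i
  decide

theorem gyrV_sub_gyrV_mem_Lbcc_iff (i j : Fin 8) :
    gyrV i - gyrV j ∈ Lbcc ↔ gyrClass i = gyrClass j := by
  rw [gyrV_eq_inv_smul_gyrNum, gyrV_eq_inv_smul_gyrNum, inv_smul_sub_inv_smul_mem_Lbcc_iff,
    bccCoord_gyrNum_mod_eight, bccCoord_gyrNum_mod_eight, classResidue_injective.eq_iff]

/-- For `i, j ∈ {0,…,7}`, `vᵢ − vⱼ ∈ L_bcc` iff `i = j` or `{i,j}` is one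
of the four pairs `{0,6}, {1,7}, {2,4}, {3,5}`; in particular the eight Gyroid vertices
fall into exactly four translation classes modulo `L_bcc`, represented by `v₀, v₁, v₂, v₃`. -/
theorem gyroid_bcc_classes :
    (∀ i j : Fin 8,
      gyrV i - gyrV j ∈ Lbcc ↔
        i = j ∨ ({i, j} : Finset (Fin 8)) ∈
          ({{0, 6}, {1, 7}, {2, 4}, {3, 5}} : Finset (Finset (Fin 8)))) ∧
    (∀ i : Fin 8, ∃! j : Fin 4, gyrV i - gyrV (Fin.castLE (by norm_num) j) ∈ Lbcc) := by
  simp only [gyrV_sub_gyrV_mem_Lbcc_iff, gyrClass_castLE]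
  exact ⟨by decide, fun i ↦ existsUnique_eq'⟩
end

section
/- Let n ≥ 1 and let e : Fin n → ℝ³ be a sequence of vectors with Σᵢ e i = 0 (a closed polygonal loop). Define the partial sums f_j = e 1 + ⋯ + e j for 1 ≤ j ≤ n and the effective normal vector N_eff(e) = Σ_{j=1}^{n−1} f_j × e_{j+1}, where × denotes the cross product on ℝ³. Then: (a) for the cyclic shift e' defined by e'_i = e_{i+1} (indices taken mod n), N_eff(e') = N_eff(e); and (b) for the reversed loop e'' defined by e''_i = −e_{n+1−i}, N_eff(e'') = −N_eff(e). -/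
open Finset in
/-- The effective normal vector of a closed polygonal loop with edge vectors
`e 0, e 1, …, e (n-1)` in `ℝ³`:
`N_eff = Σ_{j=1}^{n−1} f_j × e_{j+1}` where `f_j = e₁ + ⋯ + e_j` (here written with
`0`-based indices: `N_eff = Σ_{j=0}^{n−2} (Σ_{i=0}^{j} eᵢ) × e_{j+1}`). -/
noncomputable def effectiveNormal (n : ℕ) (e : ℕ → (Fin 3 → ℝ)) : Fin 3 → ℝ :=
  ∑ j ∈ Finset.range (n - 1),
    crossProduct (∑ i ∈ Finset.range (j + 1), e i) (e (j + 1))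

/-!
Up to its indexing, the effective normal is the sum of `eᵢ × eⱼ` over all pairs `i < j`. Reversing
the order of the edges swaps the two factors of every pair, which changes the sign of the cross
product, while negating both factors changes nothing. Moving the edge `e₀` from the front to the
back replaces its contribution `e₀ × t`, where `t` is the sum of the other edges, by `t × e₀`;
for a closed loop `t = -e₀`, so the two agree.
-/

section PairSum

open Finset

theorem sum_range_sum_range_reflect {A : Type*} [AddCommMonoid A] (f : ℕ → ℕ → A)
    (n : ℕ) :
    ∑ j ∈ range n, ∑ i ∈ range j, f (n - 1 - i) (n - 1 - j) =
      ∑ j ∈ range n, ∑ i ∈ range j, f j i := by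
  rw [sum_sigma', sum_sigma']
  refine sum_bij' (fun p _ => ⟨n - 1 - p.2, n - 1 - p.1⟩)
    (fun p _ => ⟨n - 1 - p.2, n - 1 - p.1⟩) ?_ ?_ ?_ ?_ ?_ <;>
  grind

section AddCommMonoid

variable {R M N : Type*} [CommSemiring R] [AddCommMonoid M] [Module R M] [AddCommMonoid N]
  [Module R N]

/-- The sum of `B (e i) (e j)` over all pairs `i < j < n`. For the cross product this is the
effective normal of the polygonal path with edges `e 0, …, e (n - 1)`; the sum is defined for an
arbitrary bilinear map and the path need not be closed. -/
def pairSum (B : M →ₗ[R] M →ₗ[R] N) (n : ℕ) (e : ℕ → M) : N :=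
  ∑ j ∈ range n, ∑ i ∈ range j, B (e i) (e j)

theorem pairSum_succ (B : M →ₗ[R] M →ₗ[R] N) (n : ℕ) (e : ℕ → M) :
    pairSum B (n + 1) e = pairSum B n e + B (∑ i ∈ range n, e i) (e n) := by
  rw [pairSum, sum_range_succ, map_sum, LinearMap.sum_apply, pairSum]

theorem pairSum_succ' (B : M →ₗ[R] M →ₗ[R] N) (n : ℕ) (e : ℕ → M) :
    pairSum B (n + 1) e =
      pairSum B n (fun i => e (i + 1)) + B (e 0) (∑ i ∈ range n, e (i + 1)) := by
  simp only [pairSum, sum_range_succ', sum_range_zero, add_zero, sum_add_distrib, map_sum]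

theorem pairSum_congr (B : M →ₗ[R] M →ₗ[R] N) {n : ℕ} {e e' : ℕ → M}
    (h : ∀ i < n, e i = e' i) : pairSum B n e = pairSum B n e' := by
  refine sum_congr rfl fun j hj => sum_congr rfl fun i hi => ?_
  rw [mem_range] at hi hj
  rw [h i (hi.trans hj), h j hj]

end AddCommMonoid

section AddCommGroup

variable {R M N : Type*} [CommSemiring R] [AddCommGroup M] [Module R M] [AddCommGroup N]
  [Module R N]

theorem pairSum_rotate (B : M →ₗ[R] M →ₗ[R] N) (n : ℕ) (e : ℕ → M)
    (hclosed : ∑ i ∈ range n, e i = 0) :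
    pairSum B n (fun i => e ((i + 1) % n)) = pairSum B n e := by
  obtain _ | m := n
  · rfl
  have shift_eq : ∀ i < m, e ((i + 1) % (m + 1)) = e (i + 1) := fun i hi => by
    rw [Nat.mod_eq_of_lt (by lia)]
  have tail_eq : ∑ i ∈ range m, e (i + 1) = -e 0 := by
    rwa [sum_range_succ', add_eq_zero_iff_eq_neg] at hclosed
  calc pairSum B (m + 1) (fun i => e ((i + 1) % (m + 1)))
      = pairSum B m (fun i => e (i + 1)) + B (∑ i ∈ range m, e (i + 1)) (e 0) := by
        rw [pairSum_succ, pairSum_congr B shift_eq, Nat.mod_self,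
          sum_congr rfl fun i hi => shift_eq i (mem_range.1 hi)]
    _ = pairSum B m (fun i => e (i + 1)) + B (e 0) (∑ i ∈ range m, e (i + 1)) := by
        rw [tail_eq, map_neg, map_neg, LinearMap.neg_apply]
    _ = pairSum B (m + 1) e := (pairSum_succ' B m e).symm

theorem pairSum_reverse (B : M →ₗ[R] M →ₗ[R] N) (hB : ∀ x y, -B x y = B y x) (n : ℕ)
    (e : ℕ → M) : pairSum B n (fun i => -e (n - 1 - i)) = -pairSum B n e :=
  calc pairSum B n (fun i => -e (n - 1 - i))
      = ∑ j ∈ range n, ∑ i ∈ range j, B (e (n - 1 - i)) (e (n - 1 - j)) := by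
        simp only [pairSum, map_neg, LinearMap.neg_apply, neg_neg]
    _ = ∑ j ∈ range n, ∑ i ∈ range j, B (e j) (e i) :=
        sum_range_sum_range_reflect (fun i j => B (e i) (e j)) n
    _ = -pairSum B n e := by
        simp only [pairSum, ← sum_neg_distrib, hB]

theorem effectiveNormal_cyclic_and_reverse_general (B : M →ₗ[R] M →ₗ[R] N)
    (hB : ∀ x y, -B x y = B y x) (n : ℕ) (e : ℕ → M) :
    (∑ i ∈ range n, e i = 0 → pairSum B n (fun i => e ((i + 1) % n)) = pairSum B n e) ∧
      pairSum B n (fun i => -e (n - 1 - i)) = -pairSum B n e :=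
  ⟨pairSum_rotate B n e, pairSum_reverse B hB n e⟩

end AddCommGroup

theorem effectiveNormal_eq_pairSum (n : ℕ) (e : ℕ → Fin 3 → ℝ) :
    effectiveNormal n e = pairSum crossProduct n e := by
  obtain _ | m := n
  · rfl
  · simp only [effectiveNormal, pairSum, Nat.add_sub_cancel, sum_range_succ' _ m, sum_range_zero,
      add_zero, map_sum, LinearMap.sum_apply]

end PairSum

/-- For a closed polygonal loop `e 0, …, e (n-1)` in `ℝ³` (edge vectors
summing to zero), the effective normal vector is invariant under cyclic shift of the edges
and changes sign under reversal of the loop (`e''ᵢ = −e_{n+1−i}`, one-based, i.e.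
`e'' i = −e (n−1−i)`, zero-based). -/
theorem effectiveNormal_cyclic_and_reverse (n : ℕ) (hn : 1 ≤ n)
    (e : ℕ → (Fin 3 → ℝ)) (hsum : ∑ i ∈ Finset.range n, e i = 0) :
    effectiveNormal n (fun i => e ((i + 1) % n)) = effectiveNormal n e ∧
    effectiveNormal n (fun i => -e (n - 1 - i)) = -effectiveNormal n e := by
  simp only [effectiveNormal_eq_pairSum]
  have h := effectiveNormal_cyclic_and_reverse_general crossProduct cross_anticomm n e
  exact ⟨h.1 hsum, h.2⟩
end

section
/- Let F ∈ M₄(ℂ) be the matrix all of whose entries equal 1, let K := F − I (the adjacency matrix of the complete graph on four vertices), and let D := diag(1,1,−1,−1). Then the unital subalgebra of M₄(ℂ) generated by K and D equals the set of all matrices of the form [[a,b,c,c],[b,a,c,c],[d,d,e,f],[d,d,f,e]] with a,b,c,d,e,f ∈ ℂ; in particular this algebra is a proper 6-dimensional subalgebra of M₄(ℂ). -/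
/-- `F ∈ M₄(ℂ)`: the all-ones matrix. -/
def allOnes4 : Matrix (Fin 4) (Fin 4) ℂ := Matrix.of fun _ _ => 1

/-- `K = F − I`: the adjacency matrix of the complete graph on four vertices. -/
def K4adj : Matrix (Fin 4) (Fin 4) ℂ := allOnes4 - 1

/-!
Partition the index set into the fibres of a map `π` and let `D` be a diagonal matrix that is
constant on each fibre, with distinct values on distinct fibres. Lagrange interpolation recovers
from `D` the diagonal projection onto each fibre, and compressing the all-ones matrix between two
projections gives the all-ones matrix of each block. Together these span the matrices
`diagonal (a ∘ π) + B.submatrix π π`, which already form an algebra. If every fibre has at least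
two points, an entry of each block off the main diagonal determines `B` and then a diagonal entry
determines `a`, so for `r` fibres the dimension is `r + r ^ 2`; here `r = 2`.
-/

variable {R K n ι : Type*}

section CommSemiring

variable [CommSemiring R] [DecidableEq n]

/-- The matrix with rows and columns partitioned into the fibres of `π` whose `(k, l)` block has
all entries equal to `B k l`, plus the scalar `a k` on the diagonal of the `k`-th diagonal block.
It is linear in the pair `(a, B)`. -/
def blockConstant (π : n → ι) : (ι → R) × Matrix ι ι R →ₗ[R] Matrix n n R where
  toFun x := Matrix.diagonal (x.1 ∘ π) + x.2.submatrix π π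
  map_add' x y := by
    ext i j
    by_cases h : i = j <;> simp [h, add_add_add_comm]
  map_smul' r x := by
    ext i j
    by_cases h : i = j <;> simp [h, mul_add]

theorem blockConstant_apply (π : n → ι) (a : ι → R) (B : Matrix ι ι R) :
    blockConstant π (a, B) = Matrix.diagonal (a ∘ π) + B.submatrix π π :=
  rfl

theorem blockConstant_one_zero (π : n → ι) : blockConstant π ((1 : ι → R), 0) = 1 := by
  simp [blockConstant_apply, Pi.one_comp]

theorem blockConstant_mul_blockConstant [Fintype n] (π : n → ι) (a a' : ι → R)
    (B B' : Matrix ι ι R) :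
    blockConstant π (a, B) * blockConstant π (a', B') =
      blockConstant π (a * a', Matrix.of (fun k l => a k * B' k l + B k l * a' l) +
        B.submatrix id π * B'.submatrix π id) := by
  have hsub : B.submatrix π π * B'.submatrix π π =
      (B.submatrix id π * B'.submatrix π id).submatrix π π := rfl
  simp only [blockConstant_apply, add_mul, mul_add, Matrix.diagonal_mul_diagonal, hsub]
  ext i j
  simp only [Matrix.add_apply, Matrix.diagonal_mul, Matrix.mul_diagonal, Matrix.submatrix_apply,
    Matrix.of_apply, Function.comp_def, Pi.mul_apply]
  ring

/-- The algebra of all matrices `blockConstant π (a, B)`. Over a ring it is the commutant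
of the matrices of those permutations of the index set that map each fibre of `π` to itself. -/
def blockConstantSubalgebra (R : Type*) [CommSemiring R] [Fintype n] (π : n → ι) :
    Subalgebra R (Matrix n n R) :=
  (LinearMap.range (blockConstant π)).toSubalgebra
    (LinearMap.mem_range.2 ⟨_, blockConstant_one_zero π⟩) <| by
    rintro _ _ ⟨⟨a, B⟩, rfl⟩ ⟨⟨a', B'⟩, rfl⟩
    exact ⟨_, (blockConstant_mul_blockConstant π a a' B B').symm⟩

theorem mem_blockConstantSubalgebra [Fintype n] {π : n → ι} {M : Matrix n n R} :
    M ∈ blockConstantSubalgebra R π ↔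
      ∃ (a : ι → R) (B : Matrix ι ι R), Matrix.diagonal (a ∘ π) + B.submatrix π π = M :=
  Prod.exists

theorem apply_self_eq_of_mem_blockConstantSubalgebra [Fintype n] {π : n → ι} {M : Matrix n n R}
    (hM : M ∈ blockConstantSubalgebra R π) {i j : n} (hij : π i = π j) : M i i = M j j := by
  obtain ⟨a, B, rfl⟩ := mem_blockConstantSubalgebra.1 hM
  simp [hij]

theorem blockConstantSubalgebra_ne_top [Nontrivial R] [Fintype n] {π : n → ι}
    (hπ : ¬ Function.Injective π) : blockConstantSubalgebra R π ≠ ⊤ := by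
  obtain ⟨i, j, hij, hne⟩ := Function.not_injective_iff.1 hπ
  intro htop
  have hmem : Matrix.single i i (1 : R) ∈ blockConstantSubalgebra R π := htop ▸ Algebra.mem_top
  simpa [Matrix.single_apply, hne] using apply_self_eq_of_mem_blockConstantSubalgebra hmem hij

theorem submatrix_eq_sum_diagonal_mul_allOnes_mul [Fintype n] [Fintype ι] [DecidableEq ι]
    (π : n → ι) (B : Matrix ι ι R) :
    B.submatrix π π = ∑ l, Matrix.diagonal ((B · l) ∘ π) * Matrix.of (fun _ _ => 1) *
      Matrix.diagonal (Pi.single l 1 ∘ π) := by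
  ext i j
  simp [Matrix.sum_apply, Pi.single_apply]

end CommSemiring

section CommRing

variable [CommRing R] [DecidableEq n]

theorem blockConstant_injective {π : n → ι} (hπ : ∀ k, (π ⁻¹' {k}).Nontrivial) :
    Function.Injective (blockConstant (R := R) π) := by
  rw [← LinearMap.ker_eq_bot, LinearMap.ker_eq_bot']
  rintro ⟨a, B⟩ h
  have hB : B = 0 := by
    ext k l
    obtain ⟨i, rfl⟩ := (hπ k).nonempty
    obtain ⟨j, rfl, hji⟩ := (hπ l).exists_ne i
    simpa [blockConstant_apply, hji.symm] using congr_fun₂ h i j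
  have ha : a = 0 := by
    ext k
    obtain ⟨i, rfl⟩ := (hπ k).nonempty
    simpa [blockConstant_apply, hB] using congr_fun₂ h i i
  rw [ha, hB, Prod.mk_zero_zero]

theorem finrank_blockConstantSubalgebra [Nontrivial R] [Fintype n] [Fintype ι] {π : n → ι}
    (hπ : ∀ k, (π ⁻¹' {k}).Nontrivial) :
    Module.finrank R (blockConstantSubalgebra R π) = Fintype.card ι + Fintype.card ι ^ 2 := by
  rw [← Subalgebra.finrank_toSubmodule, blockConstantSubalgebra,
    Submodule.toSubalgebra_toSubmodule, LinearMap.finrank_range_of_inj (blockConstant_injective hπ)]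
  simp [Module.finrank_matrix, sq]

end CommRing

section Field

variable [Field K] [Fintype n] [DecidableEq n]

theorem diagonal_comp_mem_adjoin [Finite ι] {d : ι → K} (hd : Function.Injective d) (π : n → ι)
    (a : ι → K) : Matrix.diagonal (a ∘ π) ∈ Algebra.adjoin K {Matrix.diagonal (d ∘ π)} := by
  classical
  cases nonempty_fintype ι
  let p := Lagrange.interpolate Finset.univ d a
  have hp : a ∘ π = Polynomial.aeval (d ∘ π) p := by
    ext i
    rw [Polynomial.aeval_pi_apply₂, Function.comp_apply, Function.comp_apply,
      Polynomial.coe_aeval_eq_eval,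
      Lagrange.eval_interpolate_at_node a hd.injOn (Finset.mem_univ (π i))]
  have hdiag : Matrix.diagonal (a ∘ π) = Polynomial.aeval (Matrix.diagonal (d ∘ π)) p := by
    rw [hp]
    exact (Polynomial.aeval_algHom_apply (Matrix.diagonalAlgHom K) (d ∘ π) p).symm
  exact hdiag ▸ Polynomial.aeval_mem_adjoin_singleton K _

theorem adjoin_allOnes_sub_one_diagonal [Finite ι] {d : ι → K} (hd : Function.Injective d)
    (π : n → ι) :
    Algebra.adjoin K {Matrix.of (fun _ _ => 1) - 1, Matrix.diagonal (d ∘ π)} =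
      blockConstantSubalgebra K π := by
  classical
  cases nonempty_fintype ι
  set S := Algebra.adjoin K {Matrix.of (fun _ _ => 1) - 1, Matrix.diagonal (d ∘ π)}
  apply le_antisymm
  · refine Algebra.adjoin_le (Set.pair_subset ?_ ?_)
    · refine mem_blockConstantSubalgebra.2 ⟨-1, Matrix.of fun _ _ => 1, ?_⟩
      ext i j
      by_cases h : i = j <;> simp [h]
    · exact mem_blockConstantSubalgebra.2 ⟨d, 0, by simp⟩
  · have hdiag (a : ι → K) : Matrix.diagonal (a ∘ π) ∈ S :=
      Algebra.adjoin_mono (by simp) (diagonal_comp_mem_adjoin hd π a)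
    have hones : Matrix.of (fun _ _ => 1) ∈ S := by
      simpa using S.add_mem (Algebra.subset_adjoin (Set.mem_insert _ _)) S.one_mem
    intro M hM
    obtain ⟨a, B, rfl⟩ := mem_blockConstantSubalgebra.1 hM
    refine S.add_mem (hdiag a) ?_
    rw [submatrix_eq_sum_diagonal_mul_allOnes_mul]
    exact S.sum_mem fun l _ => S.mul_mem (S.mul_mem (hdiag _) hones) (hdiag _)

theorem adjoin_K_D_eq_six_dim_general [Fintype ι] [Nonempty ι] {d : ι → K}
    (hd : Function.Injective d) {π : n → ι} (hπ : ∀ k, (π ⁻¹' {k}).Nontrivial) :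
    Algebra.adjoin K {Matrix.of (fun _ _ => 1) - 1, Matrix.diagonal (d ∘ π)} =
      blockConstantSubalgebra K π ∧
    Algebra.adjoin K {Matrix.of (fun _ _ => 1) - 1, Matrix.diagonal (d ∘ π)} ≠ ⊤ ∧
    Module.finrank K
        (Algebra.adjoin K {Matrix.of (fun _ _ => 1) - 1, Matrix.diagonal (d ∘ π)}) =
      Fintype.card ι + Fintype.card ι ^ 2 := by
  rw [adjoin_allOnes_sub_one_diagonal hd π]
  have hninj : ¬ Function.Injective π := by
    obtain ⟨i, hi, j, hj, hne⟩ := hπ (Classical.arbitrary ι)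
    exact fun hinj => hne (hinj (hi.trans hj.symm))
  exact ⟨rfl, blockConstantSubalgebra_ne_top hninj, finrank_blockConstantSubalgebra hπ⟩

end Field

section TwoBlocksOfTwo

theorem diagonal_comp_add_submatrix_two_two [AddMonoid R] (a b c d e f : R) :
    Matrix.diagonal (![a, e] ∘ ![(0 : Fin 2), 0, 1, 1]) +
        !![b, c; d, f].submatrix ![(0 : Fin 2), 0, 1, 1] ![(0 : Fin 2), 0, 1, 1] =
      !![a + b, b, c, c; b, a + b, c, c; d, d, e + f, f; d, d, f, e + f] := by
  ext i j
  rw [Matrix.add_apply, Matrix.submatrix_apply]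
  fin_cases i <;> fin_cases j <;> simp

theorem coe_blockConstantSubalgebra_two_two [CommRing R] :
    (blockConstantSubalgebra R ![(0 : Fin 2), 0, 1, 1] : Set (Matrix (Fin 4) (Fin 4) R)) =
      {M | ∃ a b c d e f : R, M = !![a, b, c, c; b, a, c, c; d, d, e, f; d, d, f, e]} := by
  ext M
  rw [SetLike.mem_coe, mem_blockConstantSubalgebra]
  constructor
  · rintro ⟨a, B, rfl⟩
    have h := diagonal_comp_add_submatrix_two_two (a 0) (B 0 0) (B 0 1) (B 1 0) (a 1) (B 1 1)
    rw [show ![a 0, a 1] = a from FinVec.etaExpand_eq a, ← Matrix.eta_fin_two B] at h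
    exact ⟨_, _, _, _, _, _, h⟩
  · rintro ⟨a, b, c, d, e, f, rfl⟩
    refine ⟨![a - b, e - f], !![b, c; d, f], ?_⟩
    simp only [diagonal_comp_add_submatrix_two_two, sub_add_cancel]

theorem nontrivial_preimage_singleton_two_two (k : Fin 2) :
    (![(0 : Fin 2), 0, 1, 1] ⁻¹' {k}).Nontrivial := by
  fin_cases k
  · exact ⟨0, rfl, 1, rfl, by decide⟩
  · exact ⟨2, rfl, 3, rfl, by decide⟩

theorem injective_vecCons_pair {α : Type*} {x y : α} (h : x ≠ y) :
    Function.Injective ![x, y] :=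
  Fin.cons_injective_iff.2 ⟨by simpa [eq_comm] using h, Function.injective_of_subsingleton _⟩

theorem diagonal_one_neg_one_eq_comp [Ring R] :
    (Matrix.diagonal ![1, 1, -1, -1] : Matrix (Fin 4) (Fin 4) R) =
      Matrix.diagonal (![1, -1] ∘ ![(0 : Fin 2), 0, 1, 1]) := by
  congr 1
  ext i
  fin_cases i <;> rfl

end TwoBlocksOfTwo

/-- The unital subalgebra of `M₄(ℂ)` generated by `K = F − I` and
`D = diag(1,1,−1,−1)` equals the set of matrices of the form
`[[a,b,c,c],[b,a,c,c],[d,d,e,f],[d,d,f,e]]`; in particular it is a proper 6-dimensional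
subalgebra of `M₄(ℂ)`. -/
theorem adjoin_K_D_eq_six_dim :
    (Algebra.adjoin ℂ
        ({K4adj, Matrix.diagonal ![1, 1, -1, -1]} : Set (Matrix (Fin 4) (Fin 4) ℂ)) :
        Set (Matrix (Fin 4) (Fin 4) ℂ)) =
      {M : Matrix (Fin 4) (Fin 4) ℂ |
        ∃ a b c d e f : ℂ,
          M = !![a, b, c, c; b, a, c, c; d, d, e, f; d, d, f, e]} ∧
    Algebra.adjoin ℂ
        ({K4adj, Matrix.diagonal ![1, 1, -1, -1]} : Set (Matrix (Fin 4) (Fin 4) ℂ)) ≠ ⊤ ∧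
    Module.finrank ℂ
        (Algebra.adjoin ℂ
          ({K4adj, Matrix.diagonal ![1, 1, -1, -1]} : Set (Matrix (Fin 4) (Fin 4) ℂ))) = 6 := by
  rw [diagonal_one_neg_one_eq_comp, ← coe_blockConstantSubalgebra_two_two, SetLike.coe_set_eq]
  exact adjoin_K_D_eq_six_dim_general (injective_vecCons_pair (by norm_num))
    nontrivial_preimage_singleton_two_two
end

section
/- Let F ∈ M₄(ℂ) be the matrix all of whose entries equal 1, let K := F − I, and let D' := diag(1,1,i,−i) where i is the imaginary unit. Then the unital subalgebra of M₄(ℂ) generated by K and D' equals the set of all matrices of the form [[a,b,c,d],[b,a,c,d],[e,e,g,h],[f,f,k,l]] with a,b,c,d,e,f,g,h,k,l ∈ ℂ; in particular this algebra is a proper 10-dimensional subalgebra of M₄(ℂ). -/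
/-!
The algebra generated by the all-ones matrix `F` (equivalently, by `F - 1`) and a diagonal matrix
`D` depends only on which diagonal entries of `D` coincide. By Lagrange interpolation the
polynomials in `D` are exactly the diagonal matrices constant on these classes of indices, and the
products with `F` between two of them span the matrices constant on the blocks given by pairs of
classes; sums of matrices of these two kinds are already closed under multiplication. The two kinds
overlap exactly in the one-element classes, so `r` classes, `s` of which have at least two elements,
give dimension `r² + s`. For `diag(1, 1, i, -i)` this is `3² + 1 = 10`.
-/

theorem adjoin_insert_sub_algebraMap {R A : Type*} [CommRing R] [Ring A] [Algebra R A]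
    (x : A) (r : R) (s : Set A) :
    Algebra.adjoin R (insert (x - algebraMap R A r) s) = Algebra.adjoin R (insert x s) := by
  have adjoin_le (y : A) (t : R) :
      Algebra.adjoin R (insert (y + algebraMap R A t) s) ≤ Algebra.adjoin R (insert y s) := by
    refine Algebra.adjoin_le (Set.insert_subset ?_ ?_)
    · exact add_mem (Algebra.subset_adjoin (Set.mem_insert y s)) (algebraMap_mem _ t)
    · exact (Set.subset_insert y s).trans Algebra.subset_adjoin
  apply le_antisymm
  · simpa [sub_eq_add_neg] using adjoin_le x (-r)
  · simpa using adjoin_le (x - algebraMap R A r) r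

section BlockConst

open Matrix

variable {n ι : Type*} [DecidableEq n]

section CommSemiring

variable (R : Type*) [CommSemiring R] (π : n → ι)

/-- The matrices that are constant on the blocks cut out by pairs of fibres of `π`, up to a diagonal
matrix constant on the fibres, as a linear map in the values `(f, G)`. It is not injective in
general: over a one-element fibre a diagonal entry can be moved between `f` and `G`. -/
def blockConst : (ι → R) × Matrix ι ι R →ₗ[R] Matrix n n R where
  toFun p := diagonal (p.1 ∘ π) + p.2.submatrix π π
  map_add' p q := by
    ext i j
    by_cases hij : i = j <;> simp [hij, add_add_add_comm]
  map_smul' r p := by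
    ext i j
    simp [diagonal_apply, mul_add]

variable {R π}

theorem blockConst_apply (f : ι → R) (G : Matrix ι ι R) :
    blockConst R π (f, G) = diagonal (f ∘ π) + G.submatrix π π :=
  rfl

theorem blockConst_apply_self (f : ι → R) (G : Matrix ι ι R) (i : n) :
    blockConst R π (f, G) i i = f (π i) + G (π i) (π i) := by
  simp [blockConst_apply]

theorem blockConst_apply_of_ne (f : ι → R) (G : Matrix ι ι R) {i j : n} (hij : i ≠ j) :
    blockConst R π (f, G) i j = G (π i) (π j) := by
  simp [blockConst_apply, hij]

theorem blockConst_diagonal (f : ι → R) : blockConst R π (f, 0) = diagonal (f ∘ π) := by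
  simp [blockConst_apply]

theorem blockConst_submatrix (G : Matrix ι ι R) : blockConst R π (0, G) = G.submatrix π π := by
  simp [blockConst_apply]

variable [Fintype n]

theorem blockConst_mul (f f' : ι → R) (G G' : Matrix ι ι R) :
    blockConst R π (f, G) * blockConst R π (f', G') =
      blockConst R π (f * f', of (fun a b => G a b * f' b + f a * G' a b) +
        G.submatrix id π * G'.submatrix π id) := by
  simp only [blockConst_apply, add_mul, mul_add, diagonal_mul_diagonal]
  ext i j
  simp [diagonal_apply, mul_apply (M := G.submatrix _ _), add_assoc]

variable (R π) in
/-- The algebra of matrices that are constant on the blocks cut out by pairs of fibres of `π`, up to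
a diagonal matrix constant on the fibres. -/
def blockConstSubalgebra : Subalgebra R (Matrix n n R) :=
  (blockConst R π).range.toSubalgebra ⟨(1, 0), by simp [blockConst]⟩ <| by
    rintro _ _ ⟨⟨f, G⟩, rfl⟩ ⟨⟨f', G'⟩, rfl⟩
    exact ⟨_, (blockConst_mul f f' G G').symm⟩

theorem mem_blockConstSubalgebra {M : Matrix n n R} :
    M ∈ blockConstSubalgebra R π ↔ ∃ f G, blockConst R π (f, G) = M :=
  Prod.exists

end CommSemiring

section Adjoin

variable {K : Type*} [Field K] [Fintype n] [Finite ι] {v : ι → K}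

theorem diagonal_comp_mem_adjoin_s17 (hv : Function.Injective v) (π : n → ι) (f : ι → K) :
    diagonal (f ∘ π) ∈ Algebra.adjoin K {diagonal (v ∘ π)} := by
  classical
  have := Fintype.ofFinite ι
  let p := Lagrange.interpolate Finset.univ v f
  have aeval_comp : Polynomial.aeval (v ∘ π) p = f ∘ π := by
    ext i
    rw [Polynomial.aeval_pi_apply₂, Function.comp_apply, Polynomial.coe_aeval_eq_eval]
    exact Lagrange.eval_interpolate_at_node f hv.injOn (Finset.mem_univ (π i))
  have aeval_diagonal : Polynomial.aeval (diagonal (v ∘ π)) p = diagonal (f ∘ π) := by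
    rw [← aeval_comp]
    exact Polynomial.aeval_algHom_apply (diagonalAlgHom K) (v ∘ π) p
  exact aeval_diagonal ▸ Polynomial.aeval_mem_adjoin_singleton K _

theorem submatrix_mem_adjoin (hv : Function.Injective v) (π : n → ι) (G : Matrix ι ι K) :
    G.submatrix π π ∈ Algebra.adjoin K {of fun _ _ => 1, diagonal (v ∘ π)} := by
  classical
  have := Fintype.ofFinite ι
  set S := Algebra.adjoin K {of fun _ _ => 1, diagonal (v ∘ π)}
  have ones_mem : (of fun _ _ => 1) ∈ S := Algebra.subset_adjoin (Set.mem_insert _ _)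
  have diagonal_mem (f : ι → K) : diagonal (f ∘ π) ∈ S :=
    Algebra.adjoin_mono (Set.subset_insert _ _) (diagonal_comp_mem_adjoin_s17 hv π f)
  have sum_rows : ∑ a, diagonal (Pi.single a 1 ∘ π) * (of fun _ _ => 1) * diagonal (G a ∘ π) =
      G.submatrix π π := by
    ext i j
    simp [Matrix.sum_apply, Pi.single_apply]
  rw [← sum_rows]
  exact sum_mem fun a _ => mul_mem (mul_mem (diagonal_mem _) ones_mem) (diagonal_mem _)

theorem adjoin_ones_diagonal_comp (hv : Function.Injective v) (π : n → ι) :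
    Algebra.adjoin K {of fun _ _ => 1, diagonal (v ∘ π)} = blockConstSubalgebra K π := by
  apply le_antisymm
  · refine Algebra.adjoin_le (Set.pair_subset ?_ ?_)
    · exact ⟨(0, of fun _ _ => 1), blockConst_submatrix _⟩
    · exact ⟨(v, 0), blockConst_diagonal v⟩
  · rintro _ ⟨⟨f, G⟩, rfl⟩
    exact add_mem
      (Algebra.adjoin_mono (Set.subset_insert _ _) (diagonal_comp_mem_adjoin_s17 hv π f))
      (submatrix_mem_adjoin hv π G)

end Adjoin

section Finrank

variable {R : Type*} {π : n → ι}

theorem eq_zero_of_blockConst_eq_zero [CommSemiring R] (hπ : Function.Surjective π)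
    {f : ι → R} {G : Matrix ι ι R} (hf : ∀ a, ¬(π ⁻¹' {a}).Nontrivial → f a = 0)
    (h : blockConst R π (f, G) = 0) :
    f = 0 ∧ G = 0 := by
  have off_diagonal {i j : n} (hij : i ≠ j) : G (π i) (π j) = 0 := by
    rw [← blockConst_apply_of_ne f G hij, h, Matrix.zero_apply]
  have on_diagonal (i : n) : f (π i) + G (π i) (π i) = 0 := by
    rw [← blockConst_apply_self f G, h, Matrix.zero_apply]
  have hG : G = 0 := by
    ext a b
    obtain ⟨i, rfl⟩ := hπ a
    obtain ⟨j, rfl⟩ := hπ b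
    by_cases hij : π i = π j
    · rw [← hij]
      by_cases hi : (π ⁻¹' {π i}).Nontrivial
      · obtain ⟨k, hk, hki⟩ := hi.exists_ne i
        simpa [show π k = π i from hk] using off_diagonal hki
      · simpa [hf _ hi] using on_diagonal i
    · exact off_diagonal (ne_of_apply_ne π hij)
  refine ⟨funext fun a => ?_, hG⟩
  obtain ⟨i, rfl⟩ := hπ a
  simpa [hG] using on_diagonal i

theorem blockConst_add_diagonal [CommSemiring R] [DecidableEq ι] {h : ι → R}
    (hh : ∀ a, (π ⁻¹' {a}).Nontrivial → h a = 0) (f : ι → R) (G : Matrix ι ι R) :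
    blockConst R π (f, G + diagonal h) = blockConst R π (f + h, G) := by
  ext i j
  by_cases hij : i = j
  · subst hij
    simp only [blockConst_apply_self, Matrix.add_apply, diagonal_apply_eq, Pi.add_apply]
    ring
  · have diagonal_eq_zero : diagonal h (π i) (π j) = 0 := by
      by_cases hπ : π i = π j
      · rw [← hπ, diagonal_apply_eq]
        exact hh _ ⟨i, rfl, j, hπ.symm, hij⟩
      · exact diagonal_apply_ne h hπ
    simp only [blockConst_apply_of_ne _ _ hij, Matrix.add_apply, diagonal_eq_zero, add_zero]

theorem finrank_blockConstSubalgebra [CommRing R] [Nontrivial R] [Fintype n] [Fintype ι]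
    (hπ : Function.Surjective π) :
    Module.finrank R (blockConstSubalgebra R π) =
      Fintype.card ι ^ 2 + {a | (π ⁻¹' {a}).Nontrivial}.ncard := by
  classical
  set s := {a | (π ⁻¹' {a}).Nontrivial}
  let extend : (s → R) →ₗ[R] ι → R := Function.ExtendByZero.linearMap R Subtype.val
  have extend_mem (f : s → R) (a : s) : extend f a = f a :=
    Subtype.val_injective.extend_apply f (0 : ι → R) a
  have extend_notMem (f : s → R) (a : ι) (ha : a ∉ s) : extend f a = 0 :=
    Function.extend_apply' f (0 : ι → R) a fun ⟨b, hb⟩ => ha (hb ▸ b.2)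
  let φ := blockConst R π ∘ₗ extend.prodMap LinearMap.id
  have φ_injective : Function.Injective φ := by
    rw [injective_iff_map_eq_zero]
    rintro ⟨f, G⟩ h
    obtain ⟨hf, hG⟩ := eq_zero_of_blockConst_eq_zero hπ (extend_notMem f) h
    refine Prod.ext (funext fun a => ?_) hG
    exact (extend_mem f a).symm.trans (congr_fun hf a)
  have φ_range : φ.range = (blockConst R π).range := by
    refine (LinearMap.range_comp_le_range _ _).antisymm ?_
    rintro _ ⟨⟨f, G⟩, rfl⟩
    let g := extend fun a => f a
    refine ⟨(fun a => f a, G + diagonal (f - g)), ?_⟩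
    have hg (a : ι) (ha : a ∈ s) : (f - g) a = 0 :=
      sub_eq_zero.mpr (extend_mem (fun a => f a) ⟨a, ha⟩).symm
    simpa [g] using blockConst_add_diagonal hg g G
  calc Module.finrank R (blockConstSubalgebra R π)
      = Module.finrank R φ.range := by rw [φ_range]; rfl
    _ = Module.finrank R ((s → R) × Matrix ι ι R) := LinearMap.finrank_range_of_inj φ_injective
    _ = Fintype.card ι ^ 2 + s.ncard := by
      simp [Module.finrank_matrix, sq, add_comm, Set.ncard_eq_toFinset_card']

end Finrank

end BlockConst

theorem mem_blockConstSubalgebra_fin_four {R : Type*} [CommRing R] {M : Matrix (Fin 4) (Fin 4) R} :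
    M ∈ blockConstSubalgebra R ![(0 : Fin 3), 0, 1, 2] ↔
      ∃ a b c d e f g h k l : R,
        M = !![a, b, c, d; b, a, c, d; e, e, g, h; f, f, k, l] := by
  rw [mem_blockConstSubalgebra]
  constructor
  · rintro ⟨f, G, rfl⟩
    refine ⟨f 0 + G 0 0, G 0 0, G 0 1, G 0 2, G 1 0, G 2 0, f 1 + G 1 1, G 1 2, G 2 1,
      f 2 + G 2 2, ?_⟩
    ext i j
    fin_cases i <;> fin_cases j <;>
      simp [blockConst_apply_self, blockConst_apply_of_ne]
  · rintro ⟨a, b, c, d, e, f, g, h, k, l, rfl⟩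
    refine ⟨![a - b, 0, 0], !![b, c, d; e, g, h; f, k, l], ?_⟩
    ext i j
    fin_cases i <;> fin_cases j <;>
      simp [blockConst_apply_self, blockConst_apply_of_ne]

theorem finrank_blockConstSubalgebra_fin_four {R : Type*} [CommRing R] [Nontrivial R] :
    Module.finrank R (blockConstSubalgebra R ![(0 : Fin 3), 0, 1, 2]) = 10 := by
  have nontrivial_fibers :
      {a | (![(0 : Fin 3), 0, 1, 2] ⁻¹' {a}).Nontrivial} = {0} := by
    ext a
    simp only [Set.Nontrivial, Set.mem_ofPred_eq, Set.mem_preimage, Set.mem_singleton_iff]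
    decide +revert
  rw [finrank_blockConstSubalgebra (by decide), nontrivial_fibers]
  simp

theorem blockConstSubalgebra_fin_four_ne_top {R : Type*} [CommRing R] [Nontrivial R] :
    blockConstSubalgebra R ![(0 : Fin 3), 0, 1, 2] ≠ ⊤ := by
  intro eq_top
  have finrank_eq_ten := finrank_blockConstSubalgebra_fin_four (R := R)
  rw [eq_top, subalgebra_top_finrank_eq_submodule_top_finrank, finrank_top,
    Module.finrank_matrix] at finrank_eq_ten
  simp at finrank_eq_ten

theorem adjoin_ones_sub_one_diagonal_fin_four {K : Type*} [Field K] {x y z : K}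
    (hxy : x ≠ y) (hxz : x ≠ z) (hyz : y ≠ z) :
    Algebra.adjoin K
        ({(Matrix.of fun _ _ => 1) - 1, Matrix.diagonal ![x, x, y, z]} :
          Set (Matrix (Fin 4) (Fin 4) K)) =
      blockConstSubalgebra K ![(0 : Fin 3), 0, 1, 2] := by
  have values_injective : Function.Injective ![x, y, z] := by
    intro i j
    fin_cases i <;> fin_cases j <;> simp [hxy, hxz, hyz, hxy.symm, hxz.symm, hyz.symm]
  have values_comp : ![x, x, y, z] = ![x, y, z] ∘ ![(0 : Fin 3), 0, 1, 2] := by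
    ext i
    fin_cases i <;> rfl
  rw [← map_one (algebraMap K (Matrix (Fin 4) (Fin 4) K)), adjoin_insert_sub_algebraMap,
    values_comp, adjoin_ones_diagonal_comp values_injective]

theorem adjoin_K_D'_eq_ten_dim_general {K : Type*} [Field K] {x y z : K}
    (hxy : x ≠ y) (hxz : x ≠ z) (hyz : y ≠ z) :
    (Algebra.adjoin K
        ({(Matrix.of fun _ _ => 1) - 1, Matrix.diagonal ![x, x, y, z]} :
          Set (Matrix (Fin 4) (Fin 4) K)) :
        Set (Matrix (Fin 4) (Fin 4) K)) =
      {M : Matrix (Fin 4) (Fin 4) K |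
        ∃ a b c d e f g h k l : K,
          M = !![a, b, c, d; b, a, c, d; e, e, g, h; f, f, k, l]} ∧
    Algebra.adjoin K
        ({(Matrix.of fun _ _ => 1) - 1, Matrix.diagonal ![x, x, y, z]} :
          Set (Matrix (Fin 4) (Fin 4) K)) ≠ ⊤ ∧
    Module.finrank K
        (Algebra.adjoin K
          ({(Matrix.of fun _ _ => 1) - 1, Matrix.diagonal ![x, x, y, z]} :
            Set (Matrix (Fin 4) (Fin 4) K))) = 10 := by
  rw [adjoin_ones_sub_one_diagonal_fin_four hxy hxz hyz]
  exact ⟨Set.ext fun _ => mem_blockConstSubalgebra_fin_four,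
    blockConstSubalgebra_fin_four_ne_top, finrank_blockConstSubalgebra_fin_four⟩

/-- The unital subalgebra of `M₄(ℂ)` generated by `K = F − I` and
`D' = diag(1,1,i,−i)` equals the set of matrices of the form
`[[a,b,c,d],[b,a,c,d],[e,e,g,h],[f,f,k,l]]`; in particular it is a proper 10-dimensional
subalgebra of `M₄(ℂ)`. -/
theorem adjoin_K_D'_eq_ten_dim :
    (Algebra.adjoin ℂ
        ({K4adj, Matrix.diagonal ![1, 1, Complex.I, -Complex.I]} :
          Set (Matrix (Fin 4) (Fin 4) ℂ)) :
        Set (Matrix (Fin 4) (Fin 4) ℂ)) =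
      {M : Matrix (Fin 4) (Fin 4) ℂ |
        ∃ a b c d e f g h k l : ℂ,
          M = !![a, b, c, d; b, a, c, d; e, e, g, h; f, f, k, l]} ∧
    Algebra.adjoin ℂ
        ({K4adj, Matrix.diagonal ![1, 1, Complex.I, -Complex.I]} :
          Set (Matrix (Fin 4) (Fin 4) ℂ)) ≠ ⊤ ∧
    Module.finrank ℂ
        (Algebra.adjoin ℂ
          ({K4adj, Matrix.diagonal ![1, 1, Complex.I, -Complex.I]} :
            Set (Matrix (Fin 4) (Fin 4) ℂ))) = 10 := by
  exact adjoin_K_D'_eq_ten_dim_general (by simp [Complex.ext_iff]) (by simp [Complex.ext_iff])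
    (by norm_num [Complex.ext_iff])
end
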